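/- Norm bound for the map α on positive semidefinite matrices: for every m×m real symmetric positive semidefinite matrix Λ, the spectral norm of the n×n symmetric matrix α(Λ) satisfies ‖α(Λ)‖ ≤ ‖p‖₂ · tr(Λ). -/

import Mathlib

/-! A positive semidefinite `Λ` is a sum of rank-one matrices `u uᴴ`, and `tr Λ` is the
corresponding sum of the `‖u‖²`. A real-linear map `f` satisfies `f (u uᴴ) = ‖u‖² f (w wᴴ)` with
`w = u / ‖u‖`, so the triangle inequality bounds `‖f Λ‖` by `tr Λ` times the supremum of
`‖f (w wᴴ)‖` over unit vectors `w`. The map `α` is linear and `α (u uᵀ) = M(u)`, so for it this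
supremum is `‖p‖₂`. -/

open Matrix

noncomputable section

/-- Euclidean (ℓ₂) norm of a finite real vector. -/
def vecNorm {k : ℕ} (u : Fin k → ℝ) : ℝ := Real.sqrt (∑ i, u i ^ 2)

/-- The matrix pencil `p(x, X) = F₀ + ∑ₖ xₖ Kₖ + ∑ᵢ ∑ⱼ Xᵢⱼ Lᵢⱼ`. -/
def pencil {n m : ℕ} (F0 : Matrix (Fin m) (Fin m) ℝ)
    (K : Fin n → Matrix (Fin m) (Fin m) ℝ)
    (L : Fin n → Fin n → Matrix (Fin m) (Fin m) ℝ)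
    (x : Fin n → ℝ) (X : Matrix (Fin n) (Fin n) ℝ) : Matrix (Fin m) (Fin m) ℝ :=
  F0 + ∑ k, x k • K k + ∑ i, ∑ j, X i j • L i j

/-- Negative semidefinite real matrix. -/
def NegSemidef' {k : ℕ} (A : Matrix (Fin k) (Fin k) ℝ) : Prop := (-A).PosSemidef

/-- Negative definite real matrix. -/
def NegDef' {k : ℕ} (A : Matrix (Fin k) (Fin k) ℝ) : Prop := (-A).PosDef

/-- The BMI feasible set `F = {x : p(x, xxᵀ) ⪯ 0}`. -/
def feasSet {n m : ℕ} (F0 : Matrix (Fin m) (Fin m) ℝ)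
    (K : Fin n → Matrix (Fin m) (Fin m) ℝ)
    (L : Fin n → Fin n → Matrix (Fin m) (Fin m) ℝ) : Set (Fin n → ℝ) :=
  {x | NegSemidef' (pencil F0 K L x (vecMulVec x x))}

/-- Feasibility distance `d_F(x) = inf {‖x − a‖₂ : a ∈ F}`. -/
def distF {n m : ℕ} (F0 : Matrix (Fin m) (Fin m) ℝ)
    (K : Fin n → Matrix (Fin m) (Fin m) ℝ)
    (L : Fin n → Fin n → Matrix (Fin m) (Fin m) ℝ) (x : Fin n → ℝ) : ℝ :=
  sInf {r | ∃ a ∈ feasSet F0 K L, r = vecNorm (x - a)}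

/-- `δₖ(x) = 2 ∑ᵢ xᵢ L_{k i}`. -/
def deltaMat {n m : ℕ} (L : Fin n → Fin n → Matrix (Fin m) (Fin m) ℝ)
    (k : Fin n) (x : Fin n → ℝ) : Matrix (Fin m) (Fin m) ℝ :=
  (2 : ℝ) • ∑ i, x i • L k i

/-- The MFCQ condition at a point `x`. -/
def MFCQ {n m : ℕ} (F0 : Matrix (Fin m) (Fin m) ℝ)
    (K : Fin n → Matrix (Fin m) (Fin m) ℝ)
    (L : Fin n → Fin n → Matrix (Fin m) (Fin m) ℝ) (x : Fin n → ℝ) : Prop :=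
  ∃ b : Fin n → ℝ,
    NegDef' (pencil F0 K L x (vecMulVec x x) + ∑ k, b k • (K k + deltaMat L k x))

/-- Smallest eigenvalue of a symmetric real matrix, via the Rayleigh quotient. -/
def lambdaMin {k : ℕ} (A : Matrix (Fin k) (Fin k) ℝ) : ℝ :=
  sInf {r | ∃ u : Fin k → ℝ, vecNorm u = 1 ∧ r = u ⬝ᵥ (A *ᵥ u)}

/-- The G-MFCQ function `s(x)`. -/
def sFun {n m : ℕ} (K : Fin n → Matrix (Fin m) (Fin m) ℝ)
    (L : Fin n → Fin n → Matrix (Fin m) (Fin m) ℝ) (x : Fin n → ℝ) : ℝ :=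
  sSup {r | ∃ b : Fin n → ℝ, vecNorm b = 1 ∧
    r = lambdaMin (-(∑ k, b k • (K k + deltaMat L k x)))}

/-- Spectral norm of a real matrix. -/
def specNorm {k : ℕ} (A : Matrix (Fin k) (Fin k) ℝ) : ℝ :=
  sSup {r | ∃ v : Fin k → ℝ, vecNorm v = 1 ∧ r = vecNorm (A *ᵥ v)}

/-- Pencil norm `‖p‖₂`. -/
def pencilNorm {n m : ℕ} (L : Fin n → Fin n → Matrix (Fin m) (Fin m) ℝ) : ℝ :=
  sSup {r | ∃ u : Fin m → ℝ, vecNorm u = 1 ∧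
    r = specNorm (Matrix.of fun i j => u ⬝ᵥ (L i j *ᵥ u))}

/-- Cone `C₁`: positive semidefinite matrices. -/
def coneC1 (n : ℕ) : Set (Matrix (Fin n) (Fin n) ℝ) := {H | H.PosSemidef}

/-- Cone `C₂`: symmetric matrices with `Hᵢᵢ ≥ 0` and `Hᵢᵢ Hⱼⱼ ≥ Hᵢⱼ²`. -/
def coneC2 (n : ℕ) : Set (Matrix (Fin n) (Fin n) ℝ) :=
  {H | H.IsSymm ∧ ∀ i j, 0 ≤ H i i ∧ H i j ^ 2 ≤ H i i * H j j}

/-- Cone `C₃`: symmetric matrices with `Hᵢᵢ ≥ 0` and `Hᵢᵢ + Hⱼⱼ ≥ 2|Hᵢⱼ|`. -/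
def coneC3 (n : ℕ) : Set (Matrix (Fin n) (Fin n) ℝ) :=
  {H | H.IsSymm ∧ ∀ i j, 0 ≤ H i i ∧ 2 * |H i j| ≤ H i i + H j j}

/-- Dual cone with respect to the trace inner product. -/
def dualCone {n : ℕ} (C : Set (Matrix (Fin n) (Fin n) ℝ)) :
    Set (Matrix (Fin n) (Fin n) ℝ) :=
  {Y | Y.IsSymm ∧ ∀ H ∈ C, 0 ≤ (Y * H).trace}

/-- `α(Λ)` : the n×n matrix with entries `⟨Lᵢⱼ, Λ⟩ = tr(Lᵢⱼ Λ)`. -/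
def alphaMat {n m : ℕ} (L : Fin n → Fin n → Matrix (Fin m) (Fin m) ℝ)
    (Λ : Matrix (Fin m) (Fin m) ℝ) : Matrix (Fin n) (Fin n) ℝ :=
  Matrix.of fun i j => (L i j * Λ).trace

/-- Objective of the penalized problem `(P_η)`. -/
def penObj {n : ℕ} (c xc : Fin n → ℝ) (η : ℝ) (x : Fin n → ℝ) : ℝ :=
  c ⬝ᵥ x + η * vecNorm (x - xc) ^ 2

/-- `x` is an optimal solution of the penalized problem `(P_η)`. -/
def IsOptPen {n m : ℕ} (F0 : Matrix (Fin m) (Fin m) ℝ)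
    (K : Fin n → Matrix (Fin m) (Fin m) ℝ)
    (L : Fin n → Fin n → Matrix (Fin m) (Fin m) ℝ)
    (c xc : Fin n → ℝ) (η : ℝ) (x : Fin n → ℝ) : Prop :=
  x ∈ feasSet F0 K L ∧ ∀ y ∈ feasSet F0 K L, penObj c xc η x ≤ penObj c xc η y

/-- Objective of the penalized convex relaxation `(R_{η,C})`. -/
def relObj {n : ℕ} (c xc : Fin n → ℝ) (η : ℝ) (x : Fin n → ℝ)
    (X : Matrix (Fin n) (Fin n) ℝ) : ℝ :=
  c ⬝ᵥ x + η * (X.trace - 2 * (xc ⬝ᵥ x) + xc ⬝ᵥ xc)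

/-- Feasibility for the relaxation with cone `C`. -/
def RelFeasible {n m : ℕ} (F0 : Matrix (Fin m) (Fin m) ℝ)
    (K : Fin n → Matrix (Fin m) (Fin m) ℝ)
    (L : Fin n → Fin n → Matrix (Fin m) (Fin m) ℝ)
    (C : Set (Matrix (Fin n) (Fin n) ℝ))
    (x : Fin n → ℝ) (X : Matrix (Fin n) (Fin n) ℝ) : Prop :=
  X.IsSymm ∧ NegSemidef' (pencil F0 K L x X) ∧ X - vecMulVec x x ∈ C

/-- `(x, X)` is an optimal solution of the penalized convex relaxation `(R_{η,C})`. -/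
def IsOptRel {n m : ℕ} (F0 : Matrix (Fin m) (Fin m) ℝ)
    (K : Fin n → Matrix (Fin m) (Fin m) ℝ)
    (L : Fin n → Fin n → Matrix (Fin m) (Fin m) ℝ)
    (c xc : Fin n → ℝ) (η : ℝ) (C : Set (Matrix (Fin n) (Fin n) ℝ))
    (x : Fin n → ℝ) (X : Matrix (Fin n) (Fin n) ℝ) : Prop :=
  RelFeasible F0 K L C x X ∧
    ∀ y Y, RelFeasible F0 K L C y Y → relObj c xc η x X ≤ relObj c xc η y Y

/-- The KKT conditions for `(P_η)` at `(x, Λ)`. -/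
def KKT {n m : ℕ} (F0 : Matrix (Fin m) (Fin m) ℝ)
    (K : Fin n → Matrix (Fin m) (Fin m) ℝ)
    (L : Fin n → Fin n → Matrix (Fin m) (Fin m) ℝ)
    (c xc : Fin n → ℝ) (η : ℝ)
    (x : Fin n → ℝ) (Λ : Matrix (Fin m) (Fin m) ℝ) : Prop :=
  Λ.IsSymm ∧ Λ.PosSemidef ∧
  c + (2 * η) • (x - xc) + (∑ k, ((K k * Λ).trace) • (Pi.single k 1 : Fin n → ℝ))
      + (2 : ℝ) • (alphaMat L Λ *ᵥ x) = 0 ∧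
  Λ * pencil F0 K L x (vecMulVec x x) = 0

open scoped ComplexOrder Matrix.Norms.L2Operator

section RankOne

variable {𝕜 ι E : Type*} [RCLike 𝕜] [SeminormedAddCommGroup E] [NormedSpace ℝ E]

lemma norm_apply_vecMulVec_smul (f : Matrix ι ι 𝕜 →ₗ[ℝ] E) (c : ℝ) (v : ι → 𝕜) :
    ‖f (vecMulVec (c • v) (star (c • v)))‖ = c ^ 2 * ‖f (vecMulVec v (star v))‖ := by
  rw [star_smul, star_trivial, smul_vecMulVec, vecMulVec_smul, smul_smul, ← sq, map_smul,
    norm_smul, Real.norm_of_nonneg (sq_nonneg c)]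

variable [Fintype ι]

/-- The supremum of `‖f (u uᴴ)‖` over Euclidean unit vectors `u`: the pencil norm `‖p‖₂` with the
linear map `α` replaced by an arbitrary real-linear map `f` on matrices. It is `0` if `ι` is empty,
as there are no unit vectors then. -/
def rankOneNorm (f : Matrix ι ι 𝕜 →ₗ[ℝ] E) : ℝ :=
  sSup ((fun u : EuclideanSpace 𝕜 ι ↦ ‖f (vecMulVec u (star ⇑u))‖) '' Metric.sphere 0 1)

lemma bddAbove_norm_apply_vecMulVec (f : Matrix ι ι 𝕜 →ₗ[ℝ] E) :
    BddAbove
      ((fun u : EuclideanSpace 𝕜 ι ↦ ‖f (vecMulVec u (star ⇑u))‖) '' Metric.sphere 0 1) := by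
  have hf : Continuous f := f.continuous_of_finiteDimensional
  exact (isCompact_sphere 0 1).bddAbove_image (by fun_prop)

lemma norm_apply_vecMulVec_le_of_norm_eq_one (f : Matrix ι ι 𝕜 →ₗ[ℝ] E)
    {u : EuclideanSpace 𝕜 ι} (hu : ‖u‖ = 1) :
    ‖f (vecMulVec u (star ⇑u))‖ ≤ rankOneNorm f :=
  le_csSup (bddAbove_norm_apply_vecMulVec f) ⟨u, mem_sphere_zero_iff_norm.2 hu, rfl⟩

lemma norm_apply_vecMulVec_le (f : Matrix ι ι 𝕜 →ₗ[ℝ] E) (u : EuclideanSpace 𝕜 ι) :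
    ‖f (vecMulVec u (star ⇑u))‖ ≤ rankOneNorm f * ‖u‖ ^ 2 := by
  rcases eq_or_ne u 0 with rfl | hu
  · simp
  · obtain ⟨w, hw, hwu⟩ : ∃ w : EuclideanSpace 𝕜 ι, ‖w‖ = 1 ∧ ‖u‖ • w = u :=
      ⟨‖u‖⁻¹ • u, by simp [norm_smul, hu], smul_inv_smul₀ (norm_ne_zero_iff.2 hu) u⟩
    calc ‖f (vecMulVec u (star ⇑u))‖
        = ‖u‖ ^ 2 * ‖f (vecMulVec w (star ⇑w))‖ := by
          rw [← norm_apply_vecMulVec_smul, ← WithLp.ofLp_smul, hwu]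
      _ ≤ ‖u‖ ^ 2 * rankOneNorm f := by
          gcongr
          exact norm_apply_vecMulVec_le_of_norm_eq_one f hw
      _ = rankOneNorm f * ‖u‖ ^ 2 := mul_comm _ _

lemma re_trace_vecMulVec_star (u : EuclideanSpace 𝕜 ι) :
    RCLike.re (vecMulVec u (star ⇑u)).trace = ‖u‖ ^ 2 := by
  rw [trace_vecMulVec, ← EuclideanSpace.inner_eq_star_dotProduct, ← norm_sq_eq_re_inner]

theorem bmi_alpha_norm_bound_general (f : Matrix ι ι 𝕜 →ₗ[ℝ] E) {Λ : Matrix ι ι 𝕜}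
    (hΛ : Λ.PosSemidef) : ‖f Λ‖ ≤ rankOneNorm f * RCLike.re Λ.trace := by
  obtain ⟨N, v, rfl⟩ := posSemidef_iff_eq_sum_vecMulVec.1 hΛ
  let u (k : Fin N) : EuclideanSpace 𝕜 ι := WithLp.toLp 2 (v k)
  calc ‖f (∑ k, vecMulVec (v k) (star (v k)))‖
      ≤ ∑ k, ‖f (vecMulVec (u k) (star ⇑(u k)))‖ := by
        rw [map_sum]
        exact norm_sum_le _ _
    _ ≤ ∑ k, rankOneNorm f * ‖u k‖ ^ 2 :=
        Finset.sum_le_sum fun k _ ↦ norm_apply_vecMulVec_le f (u k)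
    _ = rankOneNorm f * RCLike.re (∑ k, vecMulVec (v k) (star (v k))).trace := by
        simp only [← Finset.mul_sum, ← re_trace_vecMulVec_star, trace_sum, map_sum, u]

end RankOne

lemma vecNorm_eq_norm {k : ℕ} (u : Fin k → ℝ) : vecNorm u = ‖WithLp.toLp 2 u‖ := by
  simp [vecNorm, EuclideanSpace.norm_eq]

lemma setOf_vecNorm_eq_one_eq_image_sphere {k : ℕ} {β : Type*} (g : (Fin k → ℝ) → β) :
    {r | ∃ u : Fin k → ℝ, vecNorm u = 1 ∧ r = g u} =
      (fun u : EuclideanSpace ℝ (Fin k) ↦ g u) '' Metric.sphere 0 1 := by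
  ext r
  simp only [vecNorm_eq_norm, Set.mem_ofPred_eq, Set.mem_image, mem_sphere_zero_iff_norm,
    eq_comm (a := r)]
  exact (WithLp.ofLp_surjective 2).exists

lemma specNorm_eq_l2_opNorm {k : ℕ} (A : Matrix (Fin k) (Fin k) ℝ) : specNorm A = ‖A‖ := by
  rw [specNorm, setOf_vecNorm_eq_one_eq_image_sphere, cstar_norm_def,
    ← ContinuousLinearMap.sSup_sphere_eq_norm]
  simp only [vecNorm_eq_norm]
  rfl

section Pencil

variable {n m : ℕ} (L : Fin n → Fin n → Matrix (Fin m) (Fin m) ℝ)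

/-- `alphaMat L`, the map `α`, bundled as a linear map so that `rankOneNorm` applies to it. -/
def alphaLinearMap : Matrix (Fin m) (Fin m) ℝ →ₗ[ℝ] Matrix (Fin n) (Fin n) ℝ where
  toFun := alphaMat L
  map_add' Λ Λ' := by ext; simp [alphaMat, Matrix.mul_add]
  map_smul' c Λ := by ext; simp [alphaMat]

lemma alphaMat_vecMulVec_self (u : Fin m → ℝ) :
    alphaMat L (vecMulVec u u) = Matrix.of fun i j ↦ u ⬝ᵥ (L i j *ᵥ u) := by
  ext i j
  simp [alphaMat, mul_vecMulVec, trace_vecMulVec, dotProduct_comm]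

lemma pencilNorm_eq_rankOneNorm : pencilNorm L = rankOneNorm (alphaLinearMap L) := by
  rw [pencilNorm, setOf_vecNorm_eq_one_eq_image_sphere, rankOneNorm]
  simp only [← alphaMat_vecMulVec_self, specNorm_eq_l2_opNorm, star_trivial]
  rfl

end Pencil

theorem bmi_alpha_norm_bound {n m : ℕ} (hn : 0 < n) (hm : 0 < m)
    (L : Fin n → Fin n → Matrix (Fin m) (Fin m) ℝ)
    (hL : ∀ i j, (L i j).IsSymm) (hLsy : ∀ i j, L i j = L j i)
    (Λ : Matrix (Fin m) (Fin m) ℝ) (hΛ : Λ.PosSemidef) :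
    specNorm (alphaMat L Λ) ≤ pencilNorm L * Λ.trace := by
  rw [specNorm_eq_l2_opNorm, pencilNorm_eq_rankOneNorm]
  exact bmi_alpha_norm_bound_general (alphaLinearMap L) hΛ
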